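/- Let (G_n) be a sequence of connected d-regular simple graphs on n vertices with d = d(n) → ∞ and ε = ε(n) ∈ (0,1) with ε(n)·log d → ∞, satisfying properties P1, P2, P3 and P4, and set s = ⌈2·log n/(ε·log d)⌉. Then sup |R_{γ_S} − 2| → 0 as n → ∞, where the supremum is over all vertex sets S of G_n with |S| = s inducing a connected subgraph, γ_S is the vertex obtained by contracting S (retaining all edges, with edges inside S becoming loops at γ_S), and R_{γ_S} = Σ_{k=0}^{T} (M_Γ^k)_{γ_S,γ_S} is the expected number of visits to γ_S within the mixing time T by the lazy walk on the contracted multigraph started at γ_S. -/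

import Mathlib

open Finset Filter

noncomputable section
open scoped Classical

variable {V : Type*} [Fintype V] [DecidableEq V]

/-- Transition matrix of the simple random walk on a `d`-regular graph `G`:
from `u` the walk moves to a uniformly random neighbour. -/
def simpleStep (G : SimpleGraph V) (d : ℕ) : Matrix V V ℝ :=
  Matrix.of fun u v => if G.Adj u v then ((d : ℝ))⁻¹ else 0

/-- Transition matrix of the lazy random walk `M = (1/2)(I + A/d)`. -/
def lazyStep (G : SimpleGraph V) (d : ℕ) : Matrix V V ℝ :=
  Matrix.of fun u v =>
    (if u = v then (2 : ℝ)⁻¹ else 0) + (2 : ℝ)⁻¹ * (if G.Adj u v then ((d : ℝ))⁻¹ else 0)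

/-- Probability that the first `t` steps of the Markov chain with transition
matrix `M` started at `u` form a trajectory satisfying `E`:  the sum, over all
paths realizing the event, of the product of the transition probabilities. -/
def walkProb (M : Matrix V V ℝ) (u : V) (t : ℕ)
    (E : (Fin (t + 1) → V) → Prop) : ℝ :=
  ∑ p : Fin (t + 1) → V,
    if p 0 = u ∧ E p then ∏ i : Fin t, M (p i.castSucc) (p i.succ) else 0

/-- The mixing time `T = min { t ≥ 1 : |M^t x y - 1/n| ≤ n⁻³ for all x,y }`. -/
def mixingTime (G : SimpleGraph V) (d : ℕ) : ℕ :=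
  sInf {T : ℕ | 1 ≤ T ∧ ∀ x y : V,
    |((lazyStep G d) ^ T) x y - ((Fintype.card V : ℝ))⁻¹| ≤ (((Fintype.card V : ℝ)) ^ 3)⁻¹}

/-- Property P1: the second largest eigenvalue of the lazy walk matrix is at
most `1 - g`, stated via the Rayleigh quotient on the orthogonal complement of
the constant (top) eigenvector. -/
def SpectralGapLB (G : SimpleGraph V) (d : ℕ) (g : ℝ) : Prop :=
  ∀ x : V → ℝ, (∑ v : V, x v) = 0 →
    (∑ u : V, ∑ v : V, x u * lazyStep G d u v * x v) ≤ (1 - g) * ∑ v : V, x v ^ 2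

/-- Property P3 with constant `ρ₂`: for vertices `u,v` at distance at most
`d^ε`, the number of neighbours `w` of `v` with `dist w u ≤ dist u v` is at
most `ρ₂ · dist u v`. -/
def PropP3 (G : SimpleGraph V) (d : ℕ) (ε ρ₂ : ℝ) : Prop :=
  ∀ u v : V, (G.dist u v : ℝ) ≤ (d : ℝ) ^ ε →
    (((univ : Finset V).filter fun w => G.Adj v w ∧ G.dist w u ≤ G.dist u v).card : ℝ) ≤
      ρ₂ * (G.dist u v : ℝ)

/-- The number of edges of `G` with both endpoints in `S`. -/
def edgesInside (G : SimpleGraph V) (S : Finset V) : ℕ :=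
  ((S ×ˢ S).filter fun p => G.Adj p.1 p.2).card / 2

/-- The set of vertices of `G` not visited by the trajectory `p` at any step
`s` with `t₀ ≤ s` contains a connected (in the induced subgraph) subset of at
least `K` vertices; equivalently, the subgraph induced by this vacant set has a
connected component with at least `K` vertices. -/
def bigVacantComponent (G : SimpleGraph V) {t : ℕ} (p : Fin (t + 1) → V)
    (t₀ : ℕ) (K : ℝ) : Prop :=
  ∃ S : Finset V, (∀ v ∈ S, ∀ s : Fin (t + 1), t₀ ≤ (s : ℕ) → p s ≠ v) ∧
    (G.induce (S : Set V)).Connected ∧ K ≤ (S.card : ℝ)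


/-- Transition matrix of the lazy walk on the multigraph obtained from a
`d`-regular graph `G` by contracting the vertex set `S` to a single vertex
`γ_S` (represented by `Sum.inr ()`), retaining all edges; `γ_S` has degree
`d·|S|` with loops (from edges inside `S`) counted twice. -/
def contractedLazy (G : SimpleGraph V) (d : ℕ) (S : Finset V) :
    Matrix ({x : V // x ∉ S} ⊕ Unit) ({x : V // x ∉ S} ⊕ Unit) ℝ :=
  Matrix.of fun a b =>
    match a, b with
    | Sum.inl x, Sum.inl y => lazyStep G d x.1 y.1
    | Sum.inl x, Sum.inr _ =>
        ((S.filter fun z => G.Adj x.1 z).card : ℝ) / (2 * (d : ℝ))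
    | Sum.inr _, Sum.inl y =>
        ((S.filter fun z => G.Adj z y.1).card : ℝ) / (2 * ((d : ℝ) * (S.card : ℝ)))
    | Sum.inr _, Sum.inr _ =>
        (2 : ℝ)⁻¹ + (edgesInside G S : ℝ) / ((d : ℝ) * (S.card : ℝ))

set_option linter.unusedSectionVars false

lemma cr_card_nbr {G : SimpleGraph V} {d : ℕ} (hreg : G.IsRegularOfDegree d) (x : V) :
    ((univ : Finset V).filter fun y => G.Adj x y).card = d := by
  rw [← hreg x, ← SimpleGraph.card_neighborFinset_eq_degree]
  congr 1
  ext y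
  simp

lemma cr_P_nonneg (G : SimpleGraph V) (d : ℕ) (x y : V) : 0 ≤ simpleStep G d x y := by
  simp only [simpleStep, Matrix.of_apply]
  split_ifs <;> positivity

lemma cr_P_symm (G : SimpleGraph V) (d : ℕ) : (simpleStep G d).transpose = simpleStep G d := by
  ext x y
  simp only [simpleStep, Matrix.transpose_apply, Matrix.of_apply, G.adj_comm]

lemma cr_P_sum (G : SimpleGraph V) (d : ℕ) (x : V) (f : V → ℝ) :
    ∑ y, simpleStep G d x y * f y
      = (d : ℝ)⁻¹ * ∑ y ∈ (univ : Finset V).filter (fun y => G.Adj x y), f y := by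
  rw [Finset.mul_sum, Finset.sum_filter]
  refine Finset.sum_congr rfl fun y _ => ?_
  simp only [simpleStep, Matrix.of_apply]
  split_ifs <;> simp

lemma cr_P_row {G : SimpleGraph V} {d : ℕ} (hd : 0 < d)
    (hc : ∀ x : V, ((univ : Finset V).filter fun y => G.Adj x y).card = d) (x : V) :
    ∑ y, simpleStep G d x y = 1 := by
  have h := cr_P_sum G d x (fun _ => 1)
  simp only [mul_one, Finset.sum_const, nsmul_eq_mul, hc] at h
  rw [h]
  have : (d : ℝ) ≠ 0 := by positivity
  field_simp

lemma cr_pow_nonneg {W : Type*} [Fintype W] [DecidableEq W] (Q : Matrix W W ℝ)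
    (hQ : ∀ x y, 0 ≤ Q x y) (k : ℕ) (x y : W) : 0 ≤ (Q ^ k) x y := by
  induction k generalizing x y with
  | zero =>
    simp only [pow_zero, Matrix.one_apply]
    split_ifs <;> norm_num
  | succ k ih =>
    rw [pow_succ, Matrix.mul_apply]
    exact Finset.sum_nonneg fun z _ => mul_nonneg (ih x z) (hQ z y)

lemma cr_pow_symm (G : SimpleGraph V) (d k : ℕ) :
    ((simpleStep G d) ^ k).transpose = (simpleStep G d) ^ k := by
  rw [Matrix.transpose_pow, cr_P_symm]

lemma cr_dist {G : SimpleGraph V} {d : ℕ} (hconn : G.Connected) (k : ℕ) (x u : V)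
    (h : k < G.dist x u) : ((simpleStep G d) ^ k) x u = 0 := by
  induction k generalizing x with
  | zero =>
    have : x ≠ u := by
      rintro rfl
      simp at h
    simp [this]
  | succ k ih =>
    rw [pow_succ', Matrix.mul_apply]
    refine Finset.sum_eq_zero fun y _ => ?_
    by_cases hxy : G.Adj x y
    · rw [ih y, mul_zero]
      have h1 := hconn.dist_triangle (u := x) (v := y) (w := u)
      rw [SimpleGraph.dist_eq_one_iff_adj.mpr hxy] at h1
      omega
    · simp [simpleStep, hxy]

/-- one step contraction of `θ ^ dist`. -/
lemma cr_step {G : SimpleGraph V} {d K : ℕ} {ε ρ θ β : ℝ} (hd : 0 < d) (hconn : G.Connected)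
    (hc : ∀ x : V, ((univ : Finset V).filter fun y => G.Adj x y).card = d)
    (hP3 : PropP3 G d ε ρ) (hρ : 0 < ρ) (hK : (K : ℝ) ≤ (d : ℝ) ^ ε) (hθ : 0 < θ) (hθ1 : θ ≤ 1)
    (hβ : ρ * K / d + θ ^ 2 ≤ θ * β) (x u : V) (hx : G.dist x u ≤ K) :
    ∑ y, simpleStep G d x y * θ ^ (G.dist y u) ≤ β * θ ^ (G.dist x u) := by
  have hd' : (0 : ℝ) < d := by positivity
  rw [cr_P_sum]
  set k := G.dist x u with hk
  have h3 := hP3 u x (by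
    rw [SimpleGraph.dist_comm, ← hk]
    exact le_trans (by exact_mod_cast hx) hK)
  rw [SimpleGraph.dist_comm, ← hk] at h3
  have key : θ * ∑ y ∈ (univ : Finset V).filter (fun y => G.Adj x y), θ ^ (G.dist y u)
      ≤ θ ^ k * (ρ * K) + d * (θ ^ 2 * θ ^ k) := by
    have h4 : ∀ y ∈ (univ : Finset V).filter (fun y => G.Adj x y),
        θ * θ ^ (G.dist y u) ≤ (if G.dist y u ≤ k then θ ^ k else 0) + θ ^ 2 * θ ^ k := by
      intro y hy
      have hxy : G.Adj x y := by simpa using hy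
      have h1 := hconn.dist_triangle (u := x) (v := y) (w := u)
      rw [SimpleGraph.dist_eq_one_iff_adj.mpr hxy] at h1
      rw [← pow_succ', ← pow_add]
      split_ifs with h
      · have : θ ^ (G.dist y u + 1) ≤ θ ^ k := pow_le_pow_of_le_one hθ.le hθ1 (by omega)
        have : 0 < θ ^ (2 + k) := by positivity
        linarith
      · rw [zero_add]
        exact pow_le_pow_of_le_one hθ.le hθ1 (by omega)
    rw [Finset.mul_sum]
    refine (Finset.sum_le_sum h4).trans ?_
    rw [Finset.sum_add_distrib, Finset.sum_const, hc, nsmul_eq_mul, ← Finset.sum_filter,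
      Finset.sum_const, nsmul_eq_mul, Finset.filter_filter]
    have h5 : (((univ : Finset V).filter fun w => G.Adj x w ∧ G.dist w u ≤ k).card : ℝ) ≤ ρ * K := by
      refine h3.trans ?_
      have : (k : ℝ) ≤ K := by exact_mod_cast hx
      gcongr
    have h6 : 0 < θ ^ k := by positivity
    nlinarith
  have hpos : 0 < θ ^ k := by positivity
  have : θ * ((d : ℝ)⁻¹ * ∑ y ∈ (univ : Finset V).filter (fun y => G.Adj x y), θ ^ (G.dist y u))
      ≤ θ * (β * θ ^ k) := by
    calc _ = (d : ℝ)⁻¹ * (θ * ∑ y ∈ (univ : Finset V).filter (fun y => G.Adj x y), θ ^ (G.dist y u)) := by ring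
      _ ≤ (d : ℝ)⁻¹ * (θ ^ k * (ρ * K) + d * (θ ^ 2 * θ ^ k)) := by gcongr
      _ = (ρ * K / d + θ ^ 2) * θ ^ k := by field_simp
      _ ≤ (θ * β) * θ ^ k := by gcongr
      _ = _ := by ring
  exact le_of_mul_le_mul_left this hθ

lemma cr_pow_le {G : SimpleGraph V} {d K : ℕ} {ε ρ θ β : ℝ} (hd : 0 < d) (hconn : G.Connected)
    (hc : ∀ x : V, ((univ : Finset V).filter fun y => G.Adj x y).card = d)
    (hP3 : PropP3 G d ε ρ) (hρ : 0 < ρ) (hK : (K : ℝ) ≤ (d : ℝ) ^ ε) (hθ : 0 < θ) (hθ1 : θ ≤ 1)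
    (hβ0 : 0 ≤ β)
    (hβ : ρ * K / d + θ ^ 2 ≤ θ * β) (k : ℕ) (hk : k ≤ K) (x u : V) :
    ((simpleStep G d) ^ k) x u ≤ β ^ k := by
  have main : ∀ k ≤ K, ∀ x, ((simpleStep G d) ^ k) x u ≤ β ^ k * θ ^ (G.dist x u) := by
    intro k
    induction k with
    | zero =>
      intro _ x
      by_cases h : x = u
      · subst h; simp
      · simp only [pow_zero, Matrix.one_apply, h, if_false]; positivity
    | succ k ih =>
      intro hk x
      by_cases hx : G.dist x u ≤ K
      · rw [pow_succ', Matrix.mul_apply]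
        calc _ ≤ ∑ y, simpleStep G d x y * (β ^ k * θ ^ (G.dist y u)) :=
              Finset.sum_le_sum fun y _ =>
                mul_le_mul_of_nonneg_left (ih (by omega) y) (cr_P_nonneg _ _ _ _)
          _ = β ^ k * ∑ y, simpleStep G d x y * θ ^ (G.dist y u) := by
              rw [Finset.mul_sum]; exact Finset.sum_congr rfl fun y _ => by ring
          _ ≤ β ^ k * (β * θ ^ (G.dist x u)) := by
              gcongr
              exact cr_step hd hconn hc hP3 hρ hK hθ hθ1 hβ x u hx
          _ = _ := by ring
      · rw [cr_dist hconn (k+1) x u (by omega)]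
        positivity
  refine (main k hk x).trans ?_
  have : θ ^ (G.dist x u) ≤ 1 := pow_le_one₀ hθ.le hθ1
  have : 0 ≤ β ^ k := by positivity
  nlinarith

/-- total `k`-step weight from `S` to `S`. -/
def crA (G : SimpleGraph V) (d : ℕ) (S : Finset V) (k : ℕ) : ℝ :=
  ∑ x ∈ S, ∑ y ∈ S, ((simpleStep G d) ^ k) x y

lemma crA_nonneg (G : SimpleGraph V) (d : ℕ) (S : Finset V) (k : ℕ) : 0 ≤ crA G d S k :=
  Finset.sum_nonneg fun _ _ => Finset.sum_nonneg fun _ _ =>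
    cr_pow_nonneg _ (cr_P_nonneg G d) _ _ _

lemma crA_sq (G : SimpleGraph V) (d : ℕ) (S : Finset V) (k : ℕ) :
    crA G d S k ^ 2 ≤ S.card * crA G d S (k * 2) := by
  have h1 : crA G d S k ^ 2 ≤ S.card * ∑ x ∈ S, (∑ y ∈ S, ((simpleStep G d) ^ k) x y) ^ 2 :=
    sq_sum_le_card_mul_sum_sq
  have h2 : ∑ x ∈ S, (∑ y ∈ S, ((simpleStep G d) ^ k) x y) ^ 2
      ≤ ∑ x, (∑ y ∈ S, ((simpleStep G d) ^ k) x y) ^ 2 :=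
    Finset.sum_le_sum_of_subset_of_nonneg (Finset.subset_univ _) fun _ _ _ => sq_nonneg _
  have h3 : ∑ x, (∑ y ∈ S, ((simpleStep G d) ^ k) x y) ^ 2 = crA G d S (k * 2) := by
    unfold crA
    simp only [mul_two, pow_add, Matrix.mul_apply, sq, Finset.sum_mul_sum]
    rw [Finset.sum_comm]
    refine Finset.sum_congr rfl fun i _ => ?_
    rw [Finset.sum_comm]
    refine Finset.sum_congr rfl fun j _ => ?_
    refine Finset.sum_congr rfl fun x _ => ?_
    congr 1
    exact (congrFun (congrFun (cr_pow_symm G d k) i) x)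
  rw [h3] at h2
  exact h1.trans (by gcongr)

lemma crA_pow (G : SimpleGraph V) (d : ℕ) (S : Finset V) (hS : 0 < S.card) (k r : ℕ) :
    (crA G d S k / S.card) ^ (2 ^ r) ≤ crA G d S (k * 2 ^ r) / S.card := by
  induction r with
  | zero => simp
  | succ r ih =>
    have hs : (0 : ℝ) < S.card := by exact_mod_cast hS
    have h0 : 0 ≤ crA G d S k / S.card := div_nonneg (crA_nonneg _ _ _ _) hs.le
    calc _ = ((crA G d S k / S.card) ^ (2 ^ r)) ^ 2 := by rw [← pow_mul, pow_succ]
      _ ≤ (crA G d S (k * 2 ^ r) / S.card) ^ 2 := by gcongr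
      _ ≤ _ := by
        rw [div_pow, div_le_div_iff₀ (by positivity) hs, pow_succ 2 r, ← mul_assoc]
        have := crA_sq G d S (k * 2 ^ r)
        nlinarith

lemma crA_le {G : SimpleGraph V} {d K : ℕ} {β E : ℝ} {S : Finset V} (hS : 0 < S.card)
    (hβ0 : 0 ≤ β) (hE : 1 ≤ E)
    (hP : ∀ k ≤ K, ∀ x u, ((simpleStep G d) ^ k) x u ≤ β ^ k) (hsE : (S.card : ℝ) ≤ E ^ K)
    (k : ℕ) (hk0 : 1 ≤ k) (hk : k ≤ K) :
    crA G d S k / S.card ≤ (E ^ 2 * β) ^ k := by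
  have hs : (0 : ℝ) < S.card := by exact_mod_cast hS
  obtain ⟨r, hr1, hr2⟩ : ∃ r, k * 2 ^ r ≤ K ∧ K ≤ 2 * (k * 2 ^ r) := by
    refine ⟨Nat.log 2 (K / k), ?_, ?_⟩
    · have : 2 ^ Nat.log 2 (K / k) ≤ K / k :=
        Nat.pow_log_le_self 2 (Nat.pos_iff_ne_zero.mp (Nat.div_pos hk hk0))
      calc _ ≤ k * (K / k) := Nat.mul_le_mul_left _ this
        _ ≤ K := Nat.mul_div_le K k
    · have : K / k < 2 ^ (Nat.log 2 (K / k) + 1) := Nat.lt_pow_succ_log_self (by norm_num) _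
      have := (Nat.div_lt_iff_lt_mul hk0).mp this
      rw [pow_succ] at this
      nlinarith
  have h1 := crA_pow G d S hS k r
  have h2 : crA G d S (k * 2 ^ r) / S.card ≤ S.card * β ^ (k * 2 ^ r) := by
    rw [div_le_iff₀ hs]
    unfold crA
    calc _ ≤ ∑ x ∈ S, ∑ y ∈ S, β ^ (k * 2 ^ r) :=
          Finset.sum_le_sum fun x _ => Finset.sum_le_sum fun y _ => hP _ hr1 x y
      _ = _ := by simp; ring
  have h3 : (S.card : ℝ) * β ^ (k * 2 ^ r) ≤ ((E ^ 2 * β) ^ k) ^ (2 ^ r) := by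
    rw [← pow_mul, mul_pow, ← pow_mul]
    gcongr
    exact hsE.trans (pow_le_pow_right₀ hE hr2)
  have h0 : 0 ≤ crA G d S k / S.card := div_nonneg (crA_nonneg _ _ _ _) hs.le
  exact (pow_le_pow_iff_left₀ h0 (by positivity) (by positivity)).mp (h1.trans (h2.trans h3))

lemma crA_sum {G : SimpleGraph V} {d K : ℕ} {β E : ℝ} {S : Finset V} (hS : 0 < S.card)
    (hβ0 : 0 ≤ β) (hE : 1 ≤ E)
    (hP : ∀ k ≤ K, ∀ x u, ((simpleStep G d) ^ k) x u ≤ β ^ k) (hsE : (S.card : ℝ) ≤ E ^ K)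
    (hx : E ^ 2 * β ≤ 1 / 2) :
    ∑ k ∈ range K, crA G d S (k + 1) / S.card ≤ 2 * (E ^ 2 * β) := by
  have hy0 : 0 ≤ E ^ 2 * β := by positivity
  set y := E ^ 2 * β
  calc _ ≤ ∑ k ∈ range K, y ^ (k + 1) := Finset.sum_le_sum fun k hk =>
        crA_le hS hβ0 hE hP hsE (k+1) (by omega) (by simpa using hk)
    _ = y * ∑ k ∈ range K, y ^ k := by
        rw [Finset.mul_sum]; exact Finset.sum_congr rfl fun k _ => by ring
    _ ≤ y * 2 := by
        gcongr
        have h := mul_neg_geom_sum y K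
        have h1 : 0 ≤ y ^ K := by positivity
        have h2 : 0 ≤ ∑ k ∈ range K, y ^ k := Finset.sum_nonneg fun _ _ => by positivity
        nlinarith
    _ = _ := by ring

lemma cr_super {W : Type*} [Fintype W] [DecidableEq W] (Q : Matrix W W ℝ)
    (hQ : ∀ x y, 0 ≤ Q x y) (hrow : ∀ x, ∑ y, Q x y ≤ 1) (F : W → ℝ) (hF : ∀ x, 0 ≤ F x)
    (g : W) (c τ : ℝ) (hτ : 0 ≤ τ)
    (h : ∀ a, ∑ b, Q a b * F b ≤ F a + τ - (if a = g then c else 0)) (t : ℕ) :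
    c * ∑ k ∈ range t, (Q ^ k) g g ≤ F g + t * τ := by
  have hrowk : ∀ k, ∑ y, (Q ^ k) g y ≤ 1 := by
    intro k
    induction k with
    | zero => simp [Matrix.one_apply]
    | succ k ih =>
      simp only [pow_succ, Matrix.mul_apply]
      rw [Finset.sum_comm]
      refine le_trans (Finset.sum_le_sum fun z _ => ?_) ih
      rw [← Finset.mul_sum]
      exact mul_le_of_le_one_right (cr_pow_nonneg Q hQ k g z) (hrow z)
  have main : c * ∑ k ∈ range t, (Q ^ k) g g + ∑ b, (Q ^ t) g b * F b ≤ F g + t * τ := by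
    induction t with
    | zero => simp [Matrix.one_apply]
    | succ t ih =>
      have h1 : ∑ b, (Q ^ (t + 1)) g b * F b
          ≤ ∑ b, (Q ^ t) g b * F b + τ - c * (Q ^ t) g g := by
        calc ∑ b, (Q ^ (t + 1)) g b * F b = ∑ a, (Q ^ t) g a * ∑ b, Q a b * F b := by
              simp only [pow_succ, Matrix.mul_apply, Finset.sum_mul, Finset.mul_sum]
              rw [Finset.sum_comm]
              exact Finset.sum_congr rfl fun _ _ => Finset.sum_congr rfl fun _ _ => by ring
          _ ≤ ∑ a, (Q ^ t) g a * (F a + τ - (if a = g then c else 0)) :=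
              Finset.sum_le_sum fun a _ =>
                mul_le_mul_of_nonneg_left (h a) (cr_pow_nonneg Q hQ t g a)
          _ = ∑ b, (Q ^ t) g b * F b + τ * ∑ b, (Q ^ t) g b - c * (Q ^ t) g g := by
              simp only [mul_sub, mul_add, Finset.sum_sub_distrib, Finset.sum_add_distrib]
              rw [Finset.mul_sum]
              congr 1
              · congr 1
                exact Finset.sum_congr rfl fun _ _ => by ring
              · simp [mul_comm]
          _ ≤ _ := by
              have := mul_le_of_le_one_right hτ (hrowk t)
              linarith
      rw [Finset.sum_range_succ]
      push_cast
      nlinarith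
  have : 0 ≤ ∑ b, (Q ^ t) g b * F b :=
    Finset.sum_nonneg fun b _ => mul_nonneg (cr_pow_nonneg Q hQ t g b) (hF b)
  linarith

lemma cr_lazy (G : SimpleGraph V) (d : ℕ) :
    lazyStep G d = (2 : ℝ)⁻¹ • (1 + simpleStep G d) := by
  ext x y
  simp only [lazyStep, simpleStep, Matrix.smul_apply, Matrix.add_apply, Matrix.of_apply,
    Matrix.one_apply, smul_eq_mul]
  split_ifs <;> ring

lemma cr_lazy_sum (G : SimpleGraph V) (d : ℕ) (f : V → ℝ) (x : V) :
    ∑ y, lazyStep G d x y * f y = 2⁻¹ * (f x + ∑ y, simpleStep G d x y * f y) := by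
  simp only [cr_lazy, Matrix.smul_apply, Matrix.add_apply, smul_eq_mul, mul_add, add_mul,
    Finset.sum_add_distrib, Matrix.one_apply, Finset.mul_sum]
  congr 1
  · simp
  · exact Finset.sum_congr rfl fun _ _ => by ring

lemma cr_lazy_nonneg (G : SimpleGraph V) (d : ℕ) (x y : V) : 0 ≤ lazyStep G d x y := by
  simp only [lazyStep, Matrix.of_apply]
  split_ifs <;> positivity

lemma cr_contr_nonneg (G : SimpleGraph V) (d : ℕ) (S : Finset V) (a b) :
    0 ≤ contractedLazy G d S a b := by
  rcases a with x | x <;> rcases b with y | y <;> simp only [contractedLazy, Matrix.of_apply]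
  · exact cr_lazy_nonneg _ _ _ _
  all_goals positivity

lemma cr_split (S : Finset V) (f : V → ℝ) :
    ∑ y, f y = ∑ y : {x : V // x ∉ S}, f y.1 + ∑ y ∈ S, f y := by
  rw [← Finset.sum_compl_add_sum S f]
  congr 1
  exact Finset.sum_subtype _ (by simp) f

lemma cr_contr_inl (G : SimpleGraph V) (d : ℕ) (S : Finset V) (f : V → ℝ)
    (hf : ∀ x ∈ S, f x = 1) (x : {x : V // x ∉ S}) :
    ∑ b, contractedLazy G d S (Sum.inl x) b * (Sum.elim (fun y : {x : V // x ∉ S} => f y.1)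
      (fun _ => 1) b) = ∑ y, lazyStep G d x.1 y * f y := by
  rw [Fintype.sum_sum_type, cr_split S]
  simp only [contractedLazy, Matrix.of_apply, Sum.elim_inl, Sum.elim_inr, mul_one,
    Finset.univ_unique, Finset.sum_singleton]
  congr 1
  rw [Finset.card_filter]
  push_cast
  rw [Finset.sum_div]
  refine Finset.sum_congr rfl fun y hy => ?_
  have hne : x.1 ≠ y := fun h => x.2 (h ▸ hy)
  simp only [lazyStep, Matrix.of_apply, hne, if_false, hf y hy]
  split_ifs
  · rw [zero_add, mul_one, one_div, mul_inv]
  · simp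

lemma cr_contr_inr (G : SimpleGraph V) (d : ℕ) (S : Finset V) (f : V → ℝ)
    (hf : ∀ x ∈ S, f x = 1) (g : Unit) :
    ∑ b, contractedLazy G d S (Sum.inr g) b * (Sum.elim (fun y : {x : V // x ∉ S} => f y.1)
      (fun _ => 1) b) ≤ 2⁻¹ + (∑ x ∈ S, ∑ y, simpleStep G d x y * f y) / (2 * S.card) := by
  rw [Fintype.sum_sum_type]
  simp only [contractedLazy, Matrix.of_apply, Sum.elim_inl, Sum.elim_inr, mul_one,
    Finset.univ_unique, Finset.sum_singleton]
  have h1 : ∑ x ∈ S, ∑ y, simpleStep G d x y * f y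
      = ∑ y, ((S.filter fun z => G.Adj z y).card : ℝ) / d * f y := by
    rw [Finset.sum_comm]
    refine Finset.sum_congr rfl fun y _ => ?_
    rw [← Finset.sum_mul, Finset.card_filter]
    push_cast
    rw [Finset.sum_div]
    congr 1
    refine Finset.sum_congr rfl fun x _ => ?_
    simp only [simpleStep, Matrix.of_apply]
    split_ifs <;> simp
  have h2 : (2 * edgesInside G S : ℝ) ≤ ∑ y ∈ S, ((S.filter fun z => G.Adj z y).card : ℝ) := by
    have : 2 * edgesInside G S ≤ ((S ×ˢ S).filter fun p => G.Adj p.1 p.2).card := by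
      unfold edgesInside
      omega
    have h3 : ((S ×ˢ S).filter fun p => G.Adj p.1 p.2).card
        = ∑ y ∈ S, (S.filter fun z => G.Adj z y).card := by
      simp only [Finset.card_filter]
      rw [Finset.sum_product_right]
    rw [h3] at this
    exact_mod_cast this
  have h4 : ∑ y ∈ S, ((S.filter fun z => G.Adj z y).card : ℝ) / d * f y
      = (∑ y ∈ S, ((S.filter fun z => G.Adj z y).card : ℝ)) / d := by
    rw [Finset.sum_div]
    exact Finset.sum_congr rfl fun y hy => by rw [hf y hy, mul_one]
  rw [h1, cr_split S, h4, add_div]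
  have h5 : (edgesInside G S : ℝ) / (d * S.card)
      ≤ (∑ y ∈ S, ((S.filter fun z => G.Adj z y).card : ℝ)) / d / (2 * S.card) := by
    calc (edgesInside G S : ℝ) / (d * S.card) = (2 * edgesInside G S : ℝ) / d / (2 * S.card) := by
          rw [div_div, mul_left_comm, mul_div_mul_left _ _ (by norm_num : (2:ℝ) ≠ 0)]
      _ ≤ _ := by gcongr
  have h6 : ∑ y : {x : V // x ∉ S}, ((S.filter fun z => G.Adj z y.1).card : ℝ)
        / (2 * (d * S.card)) * f y.1
      = (∑ y : {x : V // x ∉ S}, ((S.filter fun z => G.Adj z y.1).card : ℝ) / d * f y.1)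
        / (2 * S.card) := by
    rw [Finset.sum_div]
    refine Finset.sum_congr rfl fun y _ => ?_
    rw [div_mul_eq_mul_div, div_mul_eq_mul_div, div_div, mul_left_comm]
  rw [h6]
  linarith

lemma cr_contr_row {G : SimpleGraph V} {d : ℕ} {S : Finset V} (hd : 0 < d) (hS : 0 < S.card)
    (hc : ∀ x : V, ((univ : Finset V).filter fun y => G.Adj x y).card = d) (a) :
    ∑ b, contractedLazy G d S a b ≤ 1 := by
  have hrow := cr_P_row hd hc
  have hs : (0 : ℝ) < S.card := by exact_mod_cast hS
  have e : ∀ b : {x : V // x ∉ S} ⊕ Unit, contractedLazy G d S a b = contractedLazy G d S a b *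
      (Sum.elim (fun y : {x : V // x ∉ S} => (fun _ : V => (1 : ℝ)) y.1) (fun _ => 1) b) := by
    intro b
    rcases b with b | b <;> simp
  rw [Finset.sum_congr rfl fun b _ => e b]
  rcases a with x | g
  · rw [cr_contr_inl G d S (fun _ => 1) (fun _ _ => rfl), cr_lazy_sum]
    simp only [mul_one, hrow]
    norm_num
  · refine (cr_contr_inr G d S (fun _ => 1) (fun _ _ => rfl) g).trans ?_
    simp only [mul_one, hrow, Finset.sum_const, nsmul_eq_mul]
    apply le_of_eq
    field_simp
    norm_num

/-- truncated Green function of `S`. -/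
def crG (G : SimpleGraph V) (d : ℕ) (S : Finset V) (K : ℕ) (x : V) : ℝ :=
  ∑ k ∈ range K, ∑ u ∈ S, ((simpleStep G d) ^ k) x u

lemma crG_step (G : SimpleGraph V) (d : ℕ) (S : Finset V) (K : ℕ) (x : V) :
    ∑ y, simpleStep G d x y * crG G d S K y
      = ∑ k ∈ range K, ∑ u ∈ S, ((simpleStep G d) ^ (k + 1)) x u := by
  unfold crG
  simp only [Finset.mul_sum]
  rw [Finset.sum_comm]
  refine Finset.sum_congr rfl fun k _ => ?_
  rw [Finset.sum_comm]
  refine Finset.sum_congr rfl fun u _ => ?_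
  rw [pow_succ', Matrix.mul_apply]

lemma crG_nonneg (G : SimpleGraph V) (d : ℕ) (S : Finset V) (K : ℕ) (x : V) :
    0 ≤ crG G d S K x :=
  Finset.sum_nonneg fun _ _ => Finset.sum_nonneg fun _ _ =>
    cr_pow_nonneg _ (cr_P_nonneg G d) _ _ _

/-- upper bound for the number of returns. -/
lemma cr_upper {G : SimpleGraph V} {d K : ℕ} {β E : ℝ} {S : Finset V} (hd : 0 < d)
    (hc : ∀ x : V, ((univ : Finset V).filter fun y => G.Adj x y).card = d)
    (hS : 0 < S.card) (hK : 0 < K)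
    (hβ0 : 0 ≤ β) (hE : 1 ≤ E)
    (hP : ∀ k ≤ K, ∀ x u, ((simpleStep G d) ^ k) x u ≤ β ^ k) (hsE : (S.card : ℝ) ≤ E ^ K)
    (hx : E ^ 2 * β ≤ 1 / 2) (t : ℕ) :
    (1 / 2 - E ^ 2 * β) * ∑ k ∈ range t, ((contractedLazy G d S) ^ k) (Sum.inr ()) (Sum.inr ())
      ≤ 1 + t * (S.card * β ^ K) := by
  have hs : (0 : ℝ) < S.card := by exact_mod_cast hS
  set g := crG G d S K with hg
  set f : V → ℝ := fun x => min 1 (g x) with hfdef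
  have hrow := cr_P_row hd hc
  have hgS : ∀ x ∈ S, 1 ≤ g x := by
    intro x hxS
    have h1 : ∑ u ∈ S, ((simpleStep G d) ^ 0) x u ≤ g x :=
      Finset.single_le_sum (f := fun k => ∑ u ∈ S, ((simpleStep G d) ^ k) x u)
        (fun k _ => Finset.sum_nonneg fun _ _ =>
          cr_pow_nonneg _ (cr_P_nonneg G d) _ _ _) (Finset.mem_range.mpr hK)
    simpa [Matrix.one_apply, hxS] using h1
  have hf1 : ∀ x ∈ S, f x = 1 := fun x hxS => min_eq_left (hgS x hxS)
  have hf0 : ∀ x, 0 ≤ f x := fun x => le_min zero_le_one (crG_nonneg _ _ _ _ _)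
  have hτ : 0 ≤ (S.card : ℝ) * β ^ K := by positivity
  have hstep : ∀ x, x ∉ S → ∑ y, simpleStep G d x y * g y ≤ g x + S.card * β ^ K := by
    intro x hxS
    rw [hg, crG_step]
    have h1 := Finset.sum_range_succ (fun k => ∑ u ∈ S, ((simpleStep G d) ^ k) x u) K
    rw [Finset.sum_range_succ'] at h1
    have h2 : ∑ u ∈ S, ((simpleStep G d) ^ K) x u ≤ S.card * β ^ K := by
      calc _ ≤ ∑ u ∈ S, β ^ K := Finset.sum_le_sum fun u _ => hP K le_rfl x u
        _ = _ := by simp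
    have h3 : 0 ≤ ∑ u ∈ S, ((simpleStep G d) ^ 0) x u := Finset.sum_nonneg fun _ _ =>
          cr_pow_nonneg _ (cr_P_nonneg G d) _ _ _
    unfold crG
    linarith
  have hmono : ∀ x, ∑ y, simpleStep G d x y * f y ≤ ∑ y, simpleStep G d x y * g y := fun x =>
    Finset.sum_le_sum fun y _ => mul_le_mul_of_nonneg_left (min_le_right _ _) (cr_P_nonneg _ _ _ _)
  have hone : ∀ x, ∑ y, simpleStep G d x y * f y ≤ 1 := fun x => by
    rw [← hrow x]
    exact Finset.sum_le_sum fun y _ => mul_le_of_le_one_right (cr_P_nonneg _ _ _ _) (min_le_left _ _)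
  have key := cr_super (contractedLazy G d S) (cr_contr_nonneg G d S) (cr_contr_row hd hS hc)
    (Sum.elim (fun y : {x : V // x ∉ S} => f y.1) (fun _ => 1))
    (by rintro (x | x); exacts [hf0 _, zero_le_one]) (Sum.inr ())
    (1 / 2 - E ^ 2 * β) (S.card * β ^ K) hτ ?_ t
  · simpa using key
  · rintro (x | ⟨⟩)
    · rw [cr_contr_inl G d S f hf1, cr_lazy_sum]
      simp only [Sum.elim_inl, reduceCtorEq, if_false, sub_zero]
      have h1 := hstep x.1 x.2
      have h2 := hmono x.1
      have h3 := hone x.1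
      have h4 : ∑ y, simpleStep G d x.1 y * f y ≤ f x.1 + S.card * β ^ K := by
        rw [hfdef]
        simp only
        rw [min_add_add_right _ _ _ |>.symm]
        exact le_min (by linarith) (by linarith)
      linarith
    · refine (cr_contr_inr G d S f hf1 ()).trans ?_
      simp only [Sum.elim_inr, if_true]
      have h1 : (∑ x ∈ S, ∑ y, simpleStep G d x y * f y) / (2 * S.card) ≤ E ^ 2 * β := by
        have h2 := crA_sum hS hβ0 hE hP hsE hx
        have h3 : ∑ x ∈ S, ∑ y, simpleStep G d x y * f y ≤ ∑ k ∈ range K, crA G d S (k + 1) := by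
          refine (Finset.sum_le_sum fun x _ => hmono x).trans ?_
          simp only [hg, crG_step]
          rw [Finset.sum_comm]
          rfl
        rw [← Finset.sum_div, div_le_iff₀ hs] at h2
        rw [div_le_iff₀ (by positivity)]
        linarith
      have h7 : (2:ℝ)⁻¹ = 1/2 := by norm_num
      linarith

lemma cr_lower_aux {W : Type*} [Fintype W] [DecidableEq W] (Q : Matrix W W ℝ)
    (hQ : ∀ x y, 0 ≤ Q x y) (g : W) (hg : (2:ℝ)⁻¹ ≤ Q g g) (k : ℕ) :
    ((2:ℝ)⁻¹) ^ k ≤ (Q ^ k) g g := by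
  induction k with
  | zero => simp
  | succ k ih =>
    rw [pow_succ, pow_succ, Matrix.mul_apply]
    calc _ ≤ (Q ^ k) g g * Q g g :=
          mul_le_mul ih hg (by norm_num) (cr_pow_nonneg Q hQ k g g)
      _ ≤ _ := Finset.single_le_sum (f := fun z => (Q ^ k) g z * Q z g)
        (fun z _ => mul_nonneg (cr_pow_nonneg Q hQ k g z) (hQ z g)) (Finset.mem_univ g)

lemma cr_lower (G : SimpleGraph V) (d : ℕ) (S : Finset V) (T : ℕ) :
    2 - ((2:ℝ)⁻¹) ^ T ≤
      ∑ k ∈ range (T + 1), ((contractedLazy G d S) ^ k) (Sum.inr ()) (Sum.inr ()) := by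
  have h : ∀ T : ℕ, ∑ k ∈ range (T + 1), ((2:ℝ)⁻¹) ^ k = 2 - ((2:ℝ)⁻¹) ^ T := by
    intro T
    induction T with
    | zero => norm_num
    | succ T ih => rw [Finset.sum_range_succ, ih]; ring
  rw [← h]
  refine Finset.sum_le_sum fun k _ => cr_lower_aux _ (cr_contr_nonneg G d S) _ ?_ k
  simp only [contractedLazy, Matrix.of_apply]
  have : (0:ℝ) ≤ (edgesInside G S : ℝ) / ((d : ℝ) * (S.card : ℝ)) := by positivity
  linarith

/-! Mixing time bounds -/

/-- the lazy matrix as a quadratic form is positive semidefinite -/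
lemma cr_psd {G : SimpleGraph V} {d : ℕ} (hd : 0 < d)
    (hc : ∀ x : V, ((univ : Finset V).filter fun y => G.Adj x y).card = d) (x : V → ℝ) :
    0 ≤ ∑ u, ∑ v, x u * lazyStep G d u v * x v := by
  have h1 : ∑ u, ∑ v, x u * lazyStep G d u v * x v
      = 2⁻¹ * ∑ u, (x u ^ 2 + ∑ v, simpleStep G d u v * (x u * x v)) := by
    rw [Finset.mul_sum]
    refine Finset.sum_congr rfl fun u _ => ?_
    have := cr_lazy_sum G d (fun v => x u * x v) u
    rw [sq, ← this]
    exact Finset.sum_congr rfl fun v _ => by ring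
  have h2 : ∑ u, ∑ v, simpleStep G d u v * x u ^ 2 = ∑ u, x u ^ 2 := by
    refine Finset.sum_congr rfl fun u _ => ?_
    rw [← Finset.sum_mul, cr_P_row hd hc, one_mul]
  have h3 : ∑ u, ∑ v, simpleStep G d u v * x v ^ 2 = ∑ u, x u ^ 2 := by
    rw [Finset.sum_comm]
    refine Finset.sum_congr rfl fun u _ => ?_
    rw [← Finset.sum_mul, ← cr_P_symm]
    simp only [Matrix.transpose_apply]
    rw [cr_P_row hd hc, one_mul]
  have h4 : 0 ≤ ∑ u, ∑ v, simpleStep G d u v * (x u + x v) ^ 2 :=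
    Finset.sum_nonneg fun _ _ => Finset.sum_nonneg fun _ _ =>
      mul_nonneg (cr_P_nonneg _ _ _ _) (sq_nonneg _)
  have h5 : ∑ u, ∑ v, simpleStep G d u v * (x u + x v) ^ 2
      = ∑ u, ∑ v, simpleStep G d u v * x u ^ 2 + ∑ u, ∑ v, simpleStep G d u v * x v ^ 2
        + 2 * ∑ u, ∑ v, simpleStep G d u v * (x u * x v) := by
    simp only [Finset.mul_sum, ← Finset.sum_add_distrib]
    exact Finset.sum_congr rfl fun _ _ => Finset.sum_congr rfl fun _ _ => by ring
  rw [h1, Finset.sum_add_distrib]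
  linarith

lemma cr_form (M : Matrix V V ℝ) (x : V → ℝ) :
    ∑ u, ∑ v, x u * M u v * x v = x ⬝ᵥ (M.mulVec x) := by
  simp only [dotProduct, Matrix.mulVec, Finset.mul_sum]
  exact Finset.sum_congr rfl fun _ _ => Finset.sum_congr rfl fun _ _ => by ring

lemma cr_lazy_symm (G : SimpleGraph V) (d : ℕ) : (lazyStep G d).transpose = lazyStep G d := by
  rw [cr_lazy, Matrix.transpose_smul, Matrix.transpose_add, cr_P_symm, Matrix.transpose_one]

lemma cr_lazy_row {G : SimpleGraph V} {d : ℕ} (hd : 0 < d)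
    (hc : ∀ x : V, ((univ : Finset V).filter fun y => G.Adj x y).card = d) (x : V) :
    ∑ y, lazyStep G d x y = 1 := by
  have := cr_lazy_sum G d (fun _ => 1) x
  simp only [mul_one, cr_P_row hd hc] at this
  rw [this]; norm_num

lemma cr_adj (G : SimpleGraph V) (d : ℕ) (x y : V → ℝ) :
    x ⬝ᵥ ((lazyStep G d).mulVec y) = ((lazyStep G d).mulVec x) ⬝ᵥ y := by
  rw [Matrix.dotProduct_mulVec]
  conv_lhs => rw [← cr_lazy_symm, Matrix.vecMul_transpose]

lemma cr_sum_zero {G : SimpleGraph V} {d : ℕ} (hd : 0 < d)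
    (hc : ∀ x : V, ((univ : Finset V).filter fun y => G.Adj x y).card = d) (x : V → ℝ)
    (hx : ∑ v, x v = 0) : ∑ v, ((lazyStep G d).mulVec x) v = 0 := by
  have h := cr_adj G d (fun _ => 1) x
  have h1 : (lazyStep G d).mulVec (fun _ => 1) = fun _ => 1 := by
    ext v
    simp [Matrix.mulVec, dotProduct, cr_lazy_row hd hc]
  rw [h1] at h
  simp only [dotProduct, one_mul] at h
  rw [h, hx]

lemma cr_contract {G : SimpleGraph V} {d : ℕ} (hd : 0 < d)
    (hc : ∀ x : V, ((univ : Finset V).filter fun y => G.Adj x y).card = d) {γ : ℝ}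
    (hgap : SpectralGapLB G d γ) (x : V → ℝ) (hx : ∑ v, x v = 0) :
    ((lazyStep G d).mulVec x) ⬝ᵥ ((lazyStep G d).mulVec x)
      ≤ Real.exp (-γ) ^ 2 * (x ⬝ᵥ x) := by
  set q := Real.exp (-γ) with hq
  have hq0 : 0 < q := Real.exp_pos _
  have hq1 : 1 - γ ≤ q := by
    have := Real.add_one_le_exp (-γ)
    linarith
  have hgap' : ∀ z : V → ℝ, ∑ v, z v = 0 → z ⬝ᵥ ((lazyStep G d).mulVec z) ≤ q * (z ⬝ᵥ z) := by
    intro z hz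
    have h1 := hgap z hz
    rw [cr_form] at h1
    have h2 : ∑ v, z v ^ 2 = z ⬝ᵥ z := by
      simp only [dotProduct, sq]
    rw [h2] at h1
    have h3 : 0 ≤ z ⬝ᵥ z := by
      rw [← h2]; positivity
    nlinarith
  set M := lazyStep G d with hM
  set y := M.mulVec x with hy
  have h1 := hgap' x hx
  have h2 := hgap' y (cr_sum_zero hd hc x hx)
  have h3 := cr_psd hd hc (q • x - y)
  rw [cr_form, ← hM] at h3
  have h4 : x ⬝ᵥ M.mulVec y = y ⬝ᵥ y := cr_adj G d x y
  have h5 : (q • x - y) ⬝ᵥ M.mulVec (q • x - y)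
      = q ^ 2 * (x ⬝ᵥ y) - 2 * q * (y ⬝ᵥ y) + y ⬝ᵥ M.mulVec y := by
    rw [Matrix.mulVec_sub, Matrix.mulVec_smul, ← hy, sub_dotProduct, dotProduct_sub,
      dotProduct_sub, smul_dotProduct, smul_dotProduct, dotProduct_smul, dotProduct_smul, h4]
    simp only [smul_eq_mul]
    ring
  rw [h5] at h3
  have h6 : 0 ≤ q * (q ^ 2 * (x ⬝ᵥ x) - y ⬝ᵥ y) := by nlinarith
  have h7 := nonneg_of_mul_nonneg_right h6 hq0
  linarith

lemma cr_decay {G : SimpleGraph V} {d : ℕ} (hd : 0 < d)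
    (hc : ∀ x : V, ((univ : Finset V).filter fun y => G.Adj x y).card = d) {γ : ℝ}
    (hgap : SpectralGapLB G d γ) (t : ℕ) (x y : V) :
    |((lazyStep G d) ^ t) x y - ((Fintype.card V : ℝ))⁻¹| ≤ Real.exp (-γ) ^ t := by
  have hN : (0 : ℝ) < Fintype.card V := by
    have : 0 < Fintype.card V := Fintype.card_pos_iff.mpr ⟨x⟩
    exact_mod_cast this
  set z : V → ℝ := Pi.single y 1 - fun _ => ((Fintype.card V : ℝ))⁻¹ with hz
  have hz0 : ∑ v, z v = 0 := by
    simp only [hz, Pi.sub_apply, Finset.sum_sub_distrib, Finset.sum_pi_single', Finset.mem_univ,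
      if_true, Finset.sum_const, Finset.card_univ, nsmul_eq_mul]
    field_simp
    norm_num
  have hzz : z ⬝ᵥ z ≤ 1 := by
    have e1 : z ⬝ᵥ z = z y - ((Fintype.card V : ℝ))⁻¹ * ∑ v, z v := by
      conv_lhs => enter [1]; rw [hz]
      rw [sub_dotProduct, single_dotProduct, one_mul]
      congr 1
      simp [dotProduct, Finset.mul_sum]
    rw [e1, hz0]
    simp [hz]
  have main : ∀ t : ℕ, ∑ v, (((lazyStep G d) ^ t).mulVec z) v = 0 ∧
      (((lazyStep G d) ^ t).mulVec z) ⬝ᵥ (((lazyStep G d) ^ t).mulVec z)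
        ≤ (Real.exp (-γ) ^ t) ^ 2 := by
    intro t
    induction t with
    | zero => simpa using ⟨hz0, hzz⟩
    | succ t ih =>
      rw [pow_succ', ← Matrix.mulVec_mulVec]
      refine ⟨cr_sum_zero hd hc _ ih.1, ?_⟩
      refine (cr_contract hd hc hgap _ ih.1).trans ?_
      calc _ ≤ Real.exp (-γ) ^ 2 * (Real.exp (-γ) ^ t) ^ 2 := by gcongr; exact ih.2
        _ = _ := by ring
  have hone : ∀ t : ℕ, ∑ v, ((lazyStep G d) ^ t) x v = 1 := by
    intro t
    induction t with
    | zero => simp [Matrix.one_apply]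
    | succ t ih =>
      simp only [pow_succ, Matrix.mul_apply]
      rw [Finset.sum_comm, ← ih]
      refine Finset.sum_congr rfl fun v _ => ?_
      rw [← Finset.mul_sum, cr_lazy_row hd hc, mul_one]
  have he : (((lazyStep G d) ^ t).mulVec z) x
      = ((lazyStep G d) ^ t) x y - ((Fintype.card V : ℝ))⁻¹ := by
    rw [hz, Matrix.mulVec_sub, Pi.sub_apply, Matrix.mulVec_single_one]
    congr 1
    simp only [Matrix.mulVec, dotProduct]
    rw [← Finset.sum_mul, hone, one_mul]
  rw [← he]
  refine abs_le_of_sq_le_sq ?_ (by positivity)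
  refine le_trans ?_ (main t).2
  rw [sq]
  exact Finset.single_le_sum (f := fun v => (((lazyStep G d) ^ t).mulVec z) v *
    (((lazyStep G d) ^ t).mulVec z) v) (fun v _ => mul_self_nonneg _) (Finset.mem_univ x)

lemma cr_mix {G : SimpleGraph V} {d : ℕ} (hd : 0 < d) [Nonempty V]
    (hc : ∀ x : V, ((univ : Finset V).filter fun y => G.Adj x y).card = d) {γ : ℝ} (hγ : 0 < γ)
    (hgap : SpectralGapLB G d γ) :
    (mixingTime G d : ℝ) ≤ 3 * Real.log (Fintype.card V) / γ + 1 ∧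
      ((2:ℝ)⁻¹) ^ (mixingTime G d) ≤ 2 * ((Fintype.card V : ℝ))⁻¹ := by
  have hN : (1 : ℝ) ≤ Fintype.card V := by
    have : 0 < Fintype.card V := Fintype.card_pos
    exact_mod_cast this
  have hlog : 0 ≤ Real.log (Fintype.card V) := Real.log_nonneg hN
  have good : ∀ t : ℕ, 1 ≤ t → 3 * Real.log (Fintype.card V) / γ ≤ t →
      t ∈ {T : ℕ | 1 ≤ T ∧ ∀ x y : V,
    |((lazyStep G d) ^ T) x y - ((Fintype.card V : ℝ))⁻¹| ≤ (((Fintype.card V : ℝ)) ^ 3)⁻¹} := by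
    intro t ht1 ht
    refine ⟨ht1, fun x y => (cr_decay hd hc hgap t x y).trans ?_⟩
    rw [← Real.exp_nat_mul, ← Real.exp_log (show (0:ℝ) < ((Fintype.card V : ℝ) ^ 3)⁻¹ by positivity),
      Real.exp_le_exp, Real.log_inv, Real.log_pow]
    rw [div_le_iff₀ hγ] at ht
    push_cast
    linarith
  constructor
  · have h1 : mixingTime G d ≤ ⌊3 * Real.log (Fintype.card V) / γ⌋₊ + 1 := by
      refine Nat.sInf_le (good _ (by omega) ?_)
      push_cast
      exact (Nat.lt_floor_add_one _).le
    have h2 : (⌊3 * Real.log (Fintype.card V) / γ⌋₊ : ℝ) ≤ 3 * Real.log (Fintype.card V) / γ :=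
      Nat.floor_le (by positivity)
    have h3 : (mixingTime G d : ℝ) ≤ ⌊3 * Real.log (Fintype.card V) / γ⌋₊ + 1 := by
      exact_mod_cast h1
    linarith
  · have hmem := Nat.sInf_mem ⟨_, good (⌊3 * Real.log (Fintype.card V) / γ⌋₊ + 1) (by omega)
      (by push_cast; exact (Nat.lt_floor_add_one _).le)⟩
    obtain ⟨x⟩ := (inferInstance : Nonempty V)
    have h1 := hmem.2 x x
    have h2 := cr_lower_aux (lazyStep G d) (cr_lazy_nonneg G d) x (by simp [lazyStep])
      (mixingTime G d)
    have h3 := (abs_le.mp h1).2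
    have h4 : (((Fintype.card V : ℝ)) ^ 3)⁻¹ ≤ ((Fintype.card V : ℝ))⁻¹ := by
      apply inv_anti₀ (by linarith)
      exact le_self_pow₀ hN (by norm_num)
    unfold mixingTime at h2 ⊢
    linarith

/-- everything non-asymptotic put together -/
lemma cr_fixed {G : SimpleGraph V} {d K : ℕ} {ε ρ B E c ρ₁ L δ : ℝ} {S : Finset V} [Nonempty V]
    (hreg : G.IsRegularOfDegree d) (hconn : G.Connected) (hd : 0 < d) (hε1 : ε < 1)
    (hP3 : PropP3 G d ε ρ) (hρ : 0 < ρ) (hS : 0 < S.card)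
    (hc : 0 < c) (hρ₁ : ρ₁ ≤ 3) (hgap : SpectralGapLB G d (c / (d : ℝ) ^ ρ₁))
    (hL : L = Real.log (Fintype.card V)) (hL1 : 1 ≤ L)
    (hSL : (S.card : ℝ) ≤ L) (hLE : L ≤ E ^ K) (hE : 1 ≤ E)
    (hK : (K : ℝ) ≤ (d : ℝ) ^ (ε / 2)) (hε0 : 0 < ε) (hK16 : 16 ≤ K)
    (hB : B = E ^ 2 * (1 + ρ))
    (h4 : B * (d : ℝ) ^ (-(1 / 4 : ℝ)) ≤ 1 / 4)
    (hδ1 : B * (d : ℝ) ^ (-(1 / 4 : ℝ)) ≤ δ / 16)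
    (hδ2 : (3 / c + 2) * B ^ 16 / d ≤ δ / 8)
    (hδ3 : 2 * ((Fintype.card V : ℝ))⁻¹ ≤ δ) :
    |(∑ k ∈ Finset.range (mixingTime G d + 1),
            ((contractedLazy G d S) ^ k) (Sum.inr ()) (Sum.inr ())) - 2| ≤ δ := by
  have hcd := fun x => cr_card_nbr hreg x
  have hd1 : (1 : ℝ) ≤ d := by exact_mod_cast hd
  have hd0 : (0 : ℝ) < d := by linarith
  obtain ⟨hT, hT2⟩ := cr_mix hd hcd (by positivity) hgap
  rw [← hL] at hT
  set T := mixingTime G d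
  set θ := (d : ℝ) ^ (-(1 / 4 : ℝ)) with hθ
  have hθ0 : 0 < θ := by positivity
  have hθ1 : θ ≤ 1 := Real.rpow_le_one_of_one_le_of_nonpos hd1 (by norm_num)
  have hθ4 : θ ^ 4 = (d : ℝ)⁻¹ := by
    rw [hθ, ← Real.rpow_natCast, ← Real.rpow_mul hd0.le]
    norm_num
    exact Real.rpow_neg_one _
  have hθ2 : (d : ℝ) ^ (1 / 2 : ℝ) * θ ^ 2 = 1 := by
    rw [hθ, ← Real.rpow_natCast, ← Real.rpow_mul hd0.le, ← Real.rpow_add hd0]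
    norm_num
  have hKd : (K : ℝ) / d ≤ θ ^ 2 := by
    have h1 : (K : ℝ) ≤ (d : ℝ) ^ (1 / 2 : ℝ) :=
      hK.trans (Real.rpow_le_rpow_of_exponent_le hd1 (by linarith))
    calc (K : ℝ) / d = K * θ ^ 4 := by rw [hθ4, div_eq_mul_inv]
      _ ≤ (d : ℝ) ^ (1 / 2 : ℝ) * θ ^ 4 := by gcongr
      _ = ((d : ℝ) ^ (1 / 2 : ℝ) * θ ^ 2) * θ ^ 2 := by ring
      _ = θ ^ 2 := by rw [hθ2, one_mul]
  have hP := cr_pow_le (β := (1 + ρ) * θ) hd hconn hcd hP3 hρ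
    (hK.trans (Real.rpow_le_rpow_of_exponent_le hd1 (by linarith))) hθ0 hθ1 (by positivity)
    (by rw [mul_div_assoc]; nlinarith)
  have hx : E ^ 2 * ((1 + ρ) * θ) = B * θ := by rw [hB]; ring
  have hup := cr_upper hd hcd hS (by omega) (by positivity) hE hP (hSL.trans hLE)
    (by rw [hx]; linarith) (T + 1)
  have hlo := cr_lower G d S T
  rw [hx] at hup
  set R := ∑ k ∈ Finset.range (T + 1),
            ((contractedLazy G d S) ^ k) (Sum.inr ()) (Sum.inr ())
  have hB0 : 0 ≤ B * θ := by rw [← hx]; positivity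
  have herr : ((T + 1 : ℕ) : ℝ) * (S.card * ((1 + ρ) * θ) ^ K) ≤ δ / 8 := by
    have h1 : ((T + 1 : ℕ) : ℝ) ≤ (3 / c + 2) * (d : ℝ) ^ 3 * L := by
      push_cast
      have h2 : 3 * L / (c / (d : ℝ) ^ ρ₁) ≤ 3 / c * (d : ℝ) ^ 3 * L := by
        have : (d : ℝ) ^ ρ₁ ≤ (d : ℝ) ^ (3 : ℕ) := by
          rw [← Real.rpow_natCast]
          exact Real.rpow_le_rpow_of_exponent_le hd1 (by exact_mod_cast hρ₁)
        calc 3 * L / (c / (d : ℝ) ^ ρ₁) = 3 / c * (d : ℝ) ^ ρ₁ * L := by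
              have : (d : ℝ) ^ ρ₁ ≠ 0 := by positivity
              field_simp
          _ ≤ _ := by gcongr
      have h3 : 1 ≤ (d : ℝ) ^ 3 * L := by
        have := one_le_pow₀ hd1 (n := 3)
        nlinarith
      nlinarith
    have h5 : (B * θ) ^ K ≤ (B * θ) ^ 16 :=
      pow_le_pow_of_le_one hB0 (by linarith) hK16
    calc ((T + 1 : ℕ) : ℝ) * (S.card * ((1 + ρ) * θ) ^ K)
        ≤ ((3 / c + 2) * (d : ℝ) ^ 3 * E ^ K) * (E ^ K * ((1 + ρ) * θ) ^ K) := by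
          gcongr
          · exact h1.trans (by gcongr)
          · exact hSL.trans hLE
      _ = (3 / c + 2) * (d : ℝ) ^ 3 * (B * θ) ^ K := by
          rw [← hx, mul_pow (E ^ 2), ← pow_mul, two_mul, pow_add]; ring
      _ ≤ (3 / c + 2) * (d : ℝ) ^ 3 * (B * θ) ^ 16 := by gcongr
      _ = (3 / c + 2) * (d : ℝ) ^ 3 * (B ^ 16 * (θ ^ 4) ^ 4) := by ring
      _ = (3 / c + 2) * B ^ 16 / d := by
          rw [hθ4]; field_simp
      _ ≤ δ / 8 := hδ2
  rw [abs_le]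
  constructor
  · linarith
  · have h6 : (1 / 2 - B * θ) * R ≤ 1 + δ / 8 := by linarith
    by_contra hcon
    push Not at hcon
    have h7 : (1 / 2 - B * θ) * (2 + δ) < (1 / 2 - B * θ) * R := by
      apply mul_lt_mul_of_pos_left <;> linarith
    have h8 : 0 ≤ δ := by
      have : 0 ≤ B * θ := hB0
      linarith
    have h9 : B * θ * δ ≤ 1 / 4 * δ := mul_le_mul_of_nonneg_right h4 h8
    have h10 : (1 / 2 - B * θ) * (2 + δ) = 1 + δ / 2 - 2 * (B * θ) - B * θ * δ := by ring
    rw [h10] at h7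
    linarith

/-- **Lemma 10**: with `s = ⌈2 log n/(ε log d)⌉`, uniformly over all vertex
sets `S` of size `s` inducing a connected subgraph, the expected number
`R_{γ_S}` of visits to the contracted vertex `γ_S` within the (uncontracted)
mixing time `T` by the lazy walk on the contracted multigraph started at `γ_S`
satisfies `R_{γ_S} = 2 + o(1)`.  (The `n`-th graph has `n + 1` vertices.) -/
theorem contracted_returns_estimate
    (G : ∀ n : ℕ, SimpleGraph (Fin (n + 1))) (d : ℕ → ℕ) (ε : ℕ → ℝ)
    (u : ∀ n : ℕ, Fin (n + 1))
    (hreg : ∀ n, (G n).IsRegularOfDegree (d n))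
    (hconn : ∀ n, (G n).Connected)
    (hd : Tendsto (fun n => (d n : ℝ)) atTop atTop)
    (hε : ∀ n, 0 < ε n ∧ ε n < 1)
    (hεd : Tendsto (fun n => ε n * Real.log (d n)) atTop atTop)
    (hP1 : ∃ c₁ ρ₁ : ℝ, 0 < c₁ ∧ 0 < ρ₁ ∧ ρ₁ ≤ 3 ∧
      ∀ n, SpectralGapLB (G n) (d n) (c₁ / (d n : ℝ) ^ ρ₁))
    (hP2a : Tendsto (fun n : ℕ => Real.log (Real.log ((n : ℝ) + 1)) ^ (2 / ε n) / (d n : ℝ))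
      atTop (nhds 0))
    (hP2b : ∃ c₂ : ℝ, 0 < c₂ ∧ ∀ n, 1 ≤ n →
      (d n : ℝ) ≤ c₂ * (((n : ℝ) + 1) / Real.log ((n : ℝ) + 1)) ^ ((1 : ℝ) / 5))
    (hP3 : ∃ ρ₂ : ℝ, 0 < ρ₂ ∧ ∀ n, PropP3 (G n) (d n) (ε n) ρ₂)
    (hP4 : ∀ δ : ℝ, 0 < δ → ∃ δ' : ℝ, 0 < δ' ∧ ∃ n₀ : ℕ, ∀ n, n₀ ≤ n →
      ∀ S : Finset (Fin (n + 1)), (S.card : ℝ) ≤ δ' * Real.log ((n : ℝ) + 1) →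
        (edgesInside (G n) S : ℝ) ≤ δ * (d n : ℝ) * (S.card : ℝ)) :
    ∀ δ : ℝ, 0 < δ → ∃ n₀ : ℕ, ∀ n, n₀ ≤ n →
      ∀ S : Finset (Fin (n + 1)),
        S.card = Nat.ceil (2 * Real.log ((n : ℝ) + 1) / (ε n * Real.log (d n))) →
        ((G n).induce (S : Set (Fin (n + 1)))).Connected →
        |(∑ k ∈ Finset.range (mixingTime (G n) (d n) + 1),
            ((contractedLazy (G n) (d n) S) ^ k) (Sum.inr ()) (Sum.inr ())) - 2| ≤ δ := by
  classical
  intro δ hδ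
  obtain ⟨c, ρ₁, hc, hρ₁0, hρ₁, hgap⟩ := hP1
  obtain ⟨ρ, hρ, hP3⟩ := hP3
  set E := Real.exp 2 with hE
  set B := E ^ 2 * (1 + ρ) with hB
  have hE1 : 1 ≤ E := Real.one_le_exp (by norm_num)
  have hN : Tendsto (fun n : ℕ => (n : ℝ) + 1) atTop atTop :=
    tendsto_atTop_add_const_right _ _ tendsto_natCast_atTop_atTop
  have hlogN : Tendsto (fun n : ℕ => Real.log ((n : ℝ) + 1)) atTop atTop :=
    Real.tendsto_log_atTop.comp hN
  have hth : Tendsto (fun n => B * (d n : ℝ) ^ (-(1 / 4 : ℝ))) atTop (nhds 0) := by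
    have := ((tendsto_rpow_neg_atTop (show (0:ℝ) < 1 / 4 by norm_num)).comp hd).const_mul B
    simpa using this
  have hdd : Tendsto (fun n => (3 / c + 2) * B ^ 16 / (d n : ℝ)) atTop (nhds 0) :=
    hd.const_div_atTop _
  have hNN : Tendsto (fun n : ℕ => 2 * ((n : ℝ) + 1)⁻¹) atTop (nhds 0) := by
    have := (tendsto_inv_atTop_zero.comp hN).const_mul 2
    simpa using this
  have ev : ∀ᶠ n in atTop, ∀ S : Finset (Fin (n + 1)),
        S.card = Nat.ceil (2 * Real.log ((n : ℝ) + 1) / (ε n * Real.log (d n))) →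
        ((G n).induce (S : Set (Fin (n + 1)))).Connected →
        |(∑ k ∈ Finset.range (mixingTime (G n) (d n) + 1),
            ((contractedLazy (G n) (d n) S) ^ k) (Sum.inr ()) (Sum.inr ())) - 2| ≤ δ := by
    filter_upwards [hd.eventually_ge_atTop 1, hεd.eventually_ge_atTop 34,
      hlogN.eventually_ge_atTop 2, hP2a.eventually (gt_mem_nhds zero_lt_one),
      hth.eventually (gt_mem_nhds (show (0:ℝ) < 1 / 4 by norm_num)),
      hth.eventually (gt_mem_nhds (show (0:ℝ) < δ / 16 by positivity)),
      hdd.eventually (gt_mem_nhds (show (0:ℝ) < δ / 8 by positivity)),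
      hNN.eventually (gt_mem_nhds hδ),
      (Real.tendsto_log_atTop.comp hlogN).eventually_ge_atTop 0]
      with n h1 h2 h3 h4 h5 h6 h7 h8 h9 S hS hSc
    simp only [Function.comp] at h9
    obtain ⟨hε0, hε1⟩ := hε n
    have hd0 : (0 : ℝ) < d n := by linarith
    set L := Real.log ((n : ℝ) + 1) with hL
    set D := (d n : ℝ) ^ (ε n / 2) with hD
    have hD17 : 17 ≤ D := by
      have : D = Real.exp (ε n * Real.log (d n) / 2) := by
        rw [hD, Real.rpow_def_of_pos hd0]; congr 1; ring
      rw [this]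
      have := Real.add_one_le_exp (ε n * Real.log (d n) / 2)
      linarith
    have hLD : Real.log L ≤ D := by
      have h10 : Real.log L ^ (2 / ε n) ≤ d n := by
        rw [div_lt_one hd0] at h4
        exact h4.le
      calc Real.log L = (Real.log L ^ (2 / ε n)) ^ (ε n / 2) := by
            rw [← Real.rpow_mul h9]
            have : 2 / ε n * (ε n / 2) = 1 := by field_simp
            rw [this, Real.rpow_one]
        _ ≤ D := Real.rpow_le_rpow (Real.rpow_nonneg h9 _) h10 (by positivity)
    have hKD : (⌊D⌋₊ : ℝ) ≤ D := Nat.floor_le (by linarith)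
    have hKD2 : D < ⌊D⌋₊ + 1 := Nat.lt_floor_add_one D
    have hK16 : 16 ≤ ⌊D⌋₊ := Nat.le_floor (by push_cast; linarith)
    have hK16' : (16 : ℝ) ≤ ⌊D⌋₊ := by exact_mod_cast hK16
    have hSpos : 0 < S.card := by
      rw [hS, Nat.ceil_pos]
      apply div_pos <;> linarith
    have hSL : (S.card : ℝ) ≤ L := by
      have h10 : 2 * L / (ε n * Real.log (d n)) ≤ L / 2 := by
        rw [div_le_iff₀ (by linarith)]
        nlinarith
      have h11 : (S.card : ℝ) < 2 * L / (ε n * Real.log (d n)) + 1 := by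
        rw [hS]
        apply Nat.ceil_lt_add_one
        apply div_nonneg <;> linarith
      linarith
    refine cr_fixed (K := ⌊D⌋₊) (B := B) (E := E) (L := L) (hreg n) (hconn n)
      (by exact_mod_cast h1) hε1 (hP3 n) hρ hSpos hc hρ₁ (hgap n) ?_ (by linarith) hSL ?_ hE1 hKD hε0
      hK16 hB h5.le h6.le h7.le ?_
    · rw [hL, Fintype.card_fin]; push_cast; rfl
    · rw [hE, ← Real.exp_nat_mul, ← Real.log_le_iff_le_exp (by linarith)]
      linarith
    · rw [Fintype.card_fin]; push_cast; exact h8.le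
  exact Filter.eventually_atTop.mp ev

end
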